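/- arXiv:2308.16867 — 2 statements merged into one kernel-verified Lean document; each statement's English description precedes it below -/
import Mathlib

section
/- A topological space X is a uniformizable Alexandroff space if and only if the quotient space X/ℜ is discrete, where ℜ is the equivalence relation on X defined by a ℜ b ⟺ V(a) = V(b), and X/ℜ carries the quotient topology under the natural quotient map π : X → X/ℜ. -/
open Set

variable {X : Type*}

/-- `V a` : the intersection of all open neighbourhoods of `a`. -/
def V [TopologicalSpace X] (a : X) : Set X :=
  ⋂₀ {U : Set X | IsOpen U ∧ a ∈ U}

/-- A topological space is uniformizable if its topology is induced by some
uniform structure. -/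
def Uniformizable (X : Type*) [t : TopologicalSpace X] : Prop :=
  ∃ u : UniformSpace X, u.toTopologicalSpace = t

/-- The equivalence relation `ℜ` on `X` defined by `a ℜ b ↔ V a = V b`. -/
def vSetoid (X : Type*) [TopologicalSpace X] : Setoid X :=
  ⟨fun a b => V a = V b, ⟨fun _ => rfl, Eq.symm, Eq.trans⟩⟩

/-!
The set `V a` is the neighbourhoods kernel of `{a}`, so `ℜ` is topological inseparability and `X/ℜ`
is the Kolmogorov quotient of `X`. The quotient map is inducing, so `X` is Alexandroff iff `X/ℜ` is,
and `X` is R₀ iff `X/ℜ` is T₁. A space is discrete iff it is Alexandroff and T₁; hence `X/ℜ` is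
discrete iff `X` is Alexandroff and R₀. Uniformizable means completely regular, which implies R₀;
conversely an Alexandroff R₀ space is completely regular, since its topology is induced from the
discrete space `X/ℜ`.
-/

section

variable [TopologicalSpace X]

theorem alexandrovDiscrete_iff_isOpen_nhdsKer_singleton :
    AlexandrovDiscrete X ↔ ∀ a : X, IsOpen (nhdsKer {a}) := by
  refine ⟨fun _ _ ↦ isOpen_nhdsKer, fun h ↦ ⟨fun S hS ↦ isOpen_iff_mem_nhds.2 fun a ha ↦ ?_⟩⟩
  have nhdsKer_subset : nhdsKer {a} ⊆ ⋂₀ S := subset_sInter fun s hs ↦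
    nhdsKer_minimal (singleton_subset_iff.2 (ha s hs)) (hS s hs)
  exact Filter.mem_of_superset ((h a).mem_nhds (subset_nhdsKer rfl)) nhdsKer_subset

theorem alexandrovDiscrete_separationQuotient_iff :
    AlexandrovDiscrete (SeparationQuotient X) ↔ AlexandrovDiscrete X :=
  ⟨fun _ ↦ SeparationQuotient.isInducing_mk.alexandrovDiscrete,
    fun _ ↦ Quotient.instAlexandrovDiscrete⟩

theorem discreteTopology_iff_alexandrovDiscrete_and_t1Space :
    DiscreteTopology X ↔ AlexandrovDiscrete X ∧ T1Space X :=
  ⟨fun _ ↦ ⟨inferInstance, inferInstance⟩, fun ⟨_, _⟩ ↦ inferInstance⟩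

theorem discreteTopology_separationQuotient_iff :
    DiscreteTopology (SeparationQuotient X) ↔ AlexandrovDiscrete X ∧ R0Space X := by
  rw [discreteTopology_iff_alexandrovDiscrete_and_t1Space,
    alexandrovDiscrete_separationQuotient_iff, SeparationQuotient.t1Space_iff]

theorem completelyRegularSpace_iff_r0Space [AlexandrovDiscrete X] :
    CompletelyRegularSpace X ↔ R0Space X := by
  refine ⟨fun _ ↦ inferInstance, fun hR0 ↦ ?_⟩
  have : DiscreteTopology (SeparationQuotient X) :=
    discreteTopology_separationQuotient_iff.2 ⟨‹_›, hR0⟩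
  exact SeparationQuotient.isInducing_mk.completelyRegularSpace

theorem V_eq_nhdsKer_singleton (a : X) : V a = nhdsKer {a} := by
  simp only [V, nhdsKer_def, singleton_subset_iff]

theorem forall_isOpen_V_iff_alexandrovDiscrete :
    (∀ a : X, IsOpen (V a)) ↔ AlexandrovDiscrete X := by
  simp only [V_eq_nhdsKer_singleton, alexandrovDiscrete_iff_isOpen_nhdsKer_singleton]

theorem uniformizable_iff_completelyRegularSpace : Uniformizable X ↔ CompletelyRegularSpace X :=
  completelyRegularSpace_iff_exists_uniformSpace.symm

theorem V_eq_V_iff_inseparable {a b : X} : V a = V b ↔ Inseparable a b := by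
  rw [V_eq_nhdsKer_singleton, V_eq_nhdsKer_singleton, nhdsKer_eq_nhdsKer_iff_nhdsSet,
    nhdsSet_singleton, nhdsSet_singleton, inseparable_def]

theorem vSetoid_eq_inseparableSetoid : vSetoid X = inseparableSetoid X :=
  Setoid.ext fun _ _ ↦ V_eq_V_iff_inseparable

end

/-- `X` is a uniformizable Alexandroff space iff the quotient space `X/ℜ`
(with the quotient topology) is discrete, where `a ℜ b ↔ V a = V b`. -/
theorem stmt8 [TopologicalSpace X] :
    ((∀ a : X, IsOpen (V a)) ∧ Uniformizable X) ↔
      DiscreteTopology (Quotient (vSetoid X)) := by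
  calc
    ((∀ a : X, IsOpen (V a)) ∧ Uniformizable X) ↔ AlexandrovDiscrete X ∧ CompletelyRegularSpace X :=
      and_congr forall_isOpen_V_iff_alexandrovDiscrete uniformizable_iff_completelyRegularSpace
    _ ↔ AlexandrovDiscrete X ∧ R0Space X :=
      and_congr_right fun _ ↦ completelyRegularSpace_iff_r0Space
    _ ↔ DiscreteTopology (SeparationQuotient X) := discreteTopology_separationQuotient_iff.symm
    _ ↔ DiscreteTopology (Quotient (vSetoid X)) := by
      rw [vSetoid_eq_inseparableSetoid]
      rfl
end

section
/- Let X be a uniformizable Alexandroff topological space. Then X is a functional Alexandroff space (i.e., its topology coincides with the functional Alexandroff topology of some self-map f : X → X) if and only if the smallest open neighbourhood V(a) of each point a ∈ X is a finite set. -/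
open Set

variable {X : Type*}

/-- `Vf f a = ⋃ₙ f⁻ⁿ(a)` : the union of the preimages of `{a}` under all
iterates of `f` (including the 0-th iterate). -/
def Vf (f : X → X) (a : X) : Set X :=
  ⋃ n : ℕ, (f^[n]) ⁻¹' {a}

/-- The functional Alexandroff topology on `X` corresponding to `f`, generated
by the basis `{Vf f a : a ∈ X}`. -/
def funcAlexTop (f : X → X) : TopologicalSpace X :=
  TopologicalSpace.generateFrom {S : Set X | ∃ a : X, S = Vf f a}

/-- A topological space is functional Alexandroff if its topology is the
functional Alexandroff topology corresponding to some self-map. -/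
def IsFunctionalAlexandroff (X : Type*) [t : TopologicalSpace X] : Prop :=
  ∃ f : X → X, t = funcAlexTop f

/-!
In a uniformizable space the specialization preorder is symmetric, so the sets `V a` are the fibers
of the quotient map to the Kolmogorov quotient. An Alexandroff topology is determined by its sets
`V a`, and those of the functional topology of `f` are the sets `Vf f a`. The question thus becomes
purely combinatorial: when do the forward orbits of some self-map coincide with the fibers of a
given map `π`? If they do, `f a` and `a` lie in the same fiber, so every `a` is periodic and its
orbit, which is the whole fiber, is finite. Conversely, permute each finite fiber cyclically.
-/

open Equiv Function TopologicalSpace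

section SmallestNeighborhood

variable [TopologicalSpace X] {a x : X}

theorem mem_V_iff_specializes : x ∈ V a ↔ x ⤳ a := by
  simp only [V, mem_sInter, mem_ofPred_eq, and_imp, specializes_iff_forall_open]

theorem V_eq_preimage_mk [R0Space X] (a : X) :
    V a = SeparationQuotient.mk ⁻¹' {SeparationQuotient.mk a} := by
  ext x
  rw [mem_V_iff_specializes, specializes_iff_inseparable, mem_preimage, mem_singleton_iff,
    SeparationQuotient.mk_eq_mk]

theorem isTopologicalBasis_range_V (hX : ∀ a : X, IsOpen (V a)) :
    IsTopologicalBasis (range (V : X → Set X)) :=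
  isTopologicalBasis_of_isOpen_of_nhds (forall_mem_range.2 hX) fun a _ ha hU ↦
    ⟨V a, mem_range_self a, mem_V_iff_specializes.2 specializes_rfl,
      sInter_subset_of_mem ⟨hU, ha⟩⟩

theorem Uniformizable.r0Space (hX : Uniformizable X) : R0Space X := by
  obtain ⟨u, rfl⟩ := hX
  infer_instance

end SmallestNeighborhood

theorem specializes_generateFrom_iff {S : Set (Set X)} {x a : X} :
    @Specializes X (generateFrom S) x a ↔ ∀ s ∈ S, a ∈ s → x ∈ s := by
  let := generateFrom S
  have hS : x ⤳ a ↔ ∀ s ∈ S, a ∈ s → s ∈ nhds x := tendsto_nhds_generateFrom_iff (m := id)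
  rw [hS]
  refine forall₃_congr fun s hs _ ↦ ?_
  exact (isOpen_generateFrom_of_mem hs).mem_nhds_iff

section Iterate

variable {f : X → X} {a b x : X}

theorem mem_Vf : x ∈ Vf f a ↔ a ∈ range fun n ↦ f^[n] x := by
  simp only [Vf, mem_iUnion, mem_preimage, mem_singleton_iff, mem_range]

theorem self_mem_Vf (f : X → X) (a : X) : a ∈ Vf f a :=
  mem_Vf.2 ⟨0, rfl⟩

theorem Vf_subset_Vf (h : a ∈ Vf f b) : Vf f a ⊆ Vf f b := by
  intro x hx
  obtain ⟨m, rfl⟩ := mem_Vf.1 hx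
  obtain ⟨n, rfl⟩ := mem_Vf.1 h
  exact mem_Vf.2 ⟨n + m, iterate_add_apply f n m x⟩

theorem apply_mem_Vf_iff_mem_periodicPts : f a ∈ Vf f a ↔ a ∈ periodicPts f := by
  rw [mem_Vf, mem_periodicPts]
  exact ⟨fun ⟨n, hn⟩ ↦ ⟨n + 1, n.succ_pos, hn⟩, fun ⟨n + 1, _, hn⟩ ↦ ⟨n, hn⟩⟩

theorem finite_range_iterate_of_mem_periodicPts (ha : a ∈ periodicPts f) :
    (range fun n ↦ f^[n] a).Finite := by
  refine ((finite_Iio (minimalPeriod f a)).image fun n ↦ f^[n] a).subset ?_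
  rintro _ ⟨n, rfl⟩
  exact ⟨n % minimalPeriod f a, Nat.mod_lt _ (minimalPeriod_pos_of_mem_periodicPts ha),
    iterate_mod_minimalPeriod_eq⟩

theorem eqOn_iterate {g : X → X} {s : Set X} (hfg : EqOn f g s) (hg : MapsTo g s s) (n : ℕ) :
    EqOn f^[n] g^[n] s := by
  induction n with
  | zero => exact fun _ _ ↦ rfl
  | succ n ih =>
    intro x hx
    rw [iterate_succ_apply, iterate_succ_apply, hfg hx, ih (hg hx)]

end Iterate

section FunctionalAlexandroff

variable (f : X → X)

theorem funcAlexTop_eq_generateFrom_range : funcAlexTop f = generateFrom (range (Vf f)) := by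
  simp only [funcAlexTop, range, eq_comm]

theorem V_funcAlexTop (a : X) : @V X (funcAlexTop f) a = Vf f a := by
  ext x
  rw [funcAlexTop_eq_generateFrom_range, @mem_V_iff_specializes, specializes_generateFrom_iff,
    forall_mem_range]
  exact ⟨fun h ↦ h a (self_mem_Vf f a), fun hx _ hb ↦ Vf_subset_Vf hb hx⟩

theorem eq_funcAlexTop_iff [t : TopologicalSpace X] (hX : ∀ a : X, IsOpen (V a)) :
    t = funcAlexTop f ↔ ∀ a, Vf f a = V a := by
  constructor
  · rintro rfl a
    exact (V_funcAlexTop f a).symm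
  · intro h
    rw [(isTopologicalBasis_range_V hX).eq_generateFrom, funcAlexTop_eq_generateFrom_range,
      funext h]

end FunctionalAlexandroff

section Fibers

variable {Q : Type*} {π : X → Q}

theorem finite_fiber_of_Vf_eq_fiber {f : X → X} (hf : ∀ a, Vf f a = π ⁻¹' {π a}) (a : X) :
    (π ⁻¹' {π a}).Finite := by
  have mem_Vf_iff (x b : X) : x ∈ Vf f b ↔ π x = π b := by rw [hf]; rfl
  have π_apply : π a = π (f a) := (mem_Vf_iff a (f a)).1 (mem_Vf.2 ⟨1, rfl⟩)
  have periodic : a ∈ periodicPts f :=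
    apply_mem_Vf_iff_mem_periodicPts.1 ((mem_Vf_iff (f a) a).2 π_apply.symm)
  refine (finite_range_iterate_of_mem_periodicPts periodic).subset fun x hx ↦ ?_
  exact mem_Vf.1 ((mem_Vf_iff a x).2 hx.symm)

theorem exists_range_iterate_eq_fiber (hπ : ∀ a, (π ⁻¹' {π a}).Finite) :
    ∃ f : X → X, ∀ x, (range fun n ↦ f^[n] x) = π ⁻¹' {π x} := by
  have exists_cycle (q : Q) : ∃ σ : Perm X, σ.IsCycleOn (π ⁻¹' {q}) := by
    have finite_fiber : (π ⁻¹' {q}).Finite := by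
      obtain h | ⟨a, rfl⟩ := (π ⁻¹' {q}).eq_empty_or_nonempty
      · exact h ▸ finite_empty
      · exact hπ a
    obtain ⟨σ, hσ, -⟩ := finite_fiber.countable.exists_cycleOn
    exact ⟨σ, hσ⟩
  choose σ hσ using exists_cycle
  refine ⟨fun x ↦ σ (π x) x, fun x ↦ ?_⟩
  have eqOn_fiber : EqOn (fun y ↦ σ (π y) y) (σ (π x)) (π ⁻¹' {π x}) := by
    rintro y (hy : π y = π x)
    simp only [hy]
  rw [← (hσ (π x)).range_pow (hπ x) rfl]
  congr! 2 with n
  rw [eqOn_iterate eqOn_fiber (hσ (π x)).1.mapsTo n rfl, Perm.iterate_eq_pow]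

theorem exists_Vf_eq_fiber_iff :
    (∃ f : X → X, ∀ a, Vf f a = π ⁻¹' {π a}) ↔ ∀ a, (π ⁻¹' {π a}).Finite := by
  refine ⟨fun ⟨f, hf⟩ ↦ finite_fiber_of_Vf_eq_fiber hf, fun hπ ↦ ?_⟩
  obtain ⟨f, hf⟩ := exists_range_iterate_eq_fiber hπ
  refine ⟨f, fun a ↦ ?_⟩
  ext x
  rw [mem_Vf, hf]
  exact eq_comm

end Fibers

/-- A uniformizable Alexandroff space is functional Alexandroff iff the
smallest open neighbourhood `V a` of each point is finite. -/
theorem stmt9 [TopologicalSpace X] (hA : ∀ a : X, IsOpen (V a))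
    (hU : Uniformizable X) :
    IsFunctionalAlexandroff X ↔ ∀ a : X, (V a).Finite := by
  have : R0Space X := hU.r0Space
  calc IsFunctionalAlexandroff X
      ↔ ∃ f : X → X, ∀ a, Vf f a = V a := exists_congr fun f ↦ eq_funcAlexTop_iff f hA
    _ ↔ ∀ a : X, (V a).Finite := by
      simp only [V_eq_preimage_mk]
      exact exists_Vf_eq_fiber_iff
end
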